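/- Let E be a separable Banach space, let μ be a centered Gaussian probability measure on E with full topological support, and let V : E → ℝ be Borel measurable. Suppose there is a nonempty connected open subset U ⊆ E on which V is continuously Fréchet differentiable and on which V is not constant. Then the pushforward measure V_*μ on ℝ and the Lebesgue measure on ℝ are not mutually singular. -/

import Mathlib

open MeasureTheory ProbabilityTheory

lemma aux_oneDim (f f' : ℝ → ℝ) (hf : Measurable f) (I N : Set ℝ) (hI : Convex ℝ I) (hIo : IsOpen I)
    (hd : ∀ t ∈ I, HasDerivAt f (f' t) t) (hpos : ∀ t ∈ I, 0 < f' t)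
    (hN : MeasurableSet N) (hN0 : volume N = 0) : volume (I ∩ f ⁻¹' N) = 0 := by
  have hmono : StrictMonoOn f I := by
    refine strictMonoOn_of_deriv_pos hI (fun t ht => (hd t ht).continuousAt.continuousWithinAt) ?_
    intro t ht
    have ht' := interior_subset ht
    rw [(hd t ht').deriv]
    exact hpos t ht'
  have hs : MeasurableSet (I ∩ f ⁻¹' N) := hIo.measurableSet.inter (hf hN)
  have key := lintegral_image_eq_lintegral_abs_deriv_mul hs
    (fun t ht => (hd t ht.1).hasDerivWithinAt) (hmono.injOn.mono Set.inter_subset_left) (fun _ => 1)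
  have h0 : volume (f '' (I ∩ f ⁻¹' N)) = 0 := by
    refine measure_mono_null ?_ hN0
    rintro _ ⟨t, ht, rfl⟩
    exact ht.2
  rw [Measure.restrict_eq_zero.2 h0] at key
  simp only [lintegral_zero_measure, mul_one] at key
  by_contra hne
  have hpos' : 0 < ∫⁻ t in I ∩ f ⁻¹' N, ENNReal.ofReal |f' t| := by
    have hc : ∫⁻ t in I ∩ f ⁻¹' N, ENNReal.ofReal |f' t| =
        ∫⁻ t in I ∩ f ⁻¹' N, ENNReal.ofReal |deriv f t| :=
      setLIntegral_congr_fun hs (fun t ht => by simp only [(hd t ht.1).deriv])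
    rw [hc, setLIntegral_pos_iff ((measurable_deriv f).abs.ennreal_ofReal),
      Set.inter_eq_self_of_subset_right]
    · exact pos_iff_ne_zero.2 hne
    · intro t ht
      have := hpos t ht.1
      rw [Function.mem_support, (hd t ht.1).deriv]
      simp [this.ne']
  exact absurd key hpos'.ne

lemma aux_decomp {E : Type*} [NormedAddCommGroup E] [NormedSpace ℝ E] [CompleteSpace E]
    [SecondCountableTopology E] [MeasurableSpace E] [BorelSpace E]
    (μ : Measure E) [IsProbabilityMeasure μ]
    (hGauss : ∀ L : E →L[ℝ] ℝ, ∃ v : NNReal, μ.map L = gaussianReal 0 v)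
    (l : E →L[ℝ] ℝ) (v : NNReal) (hv : v ≠ 0) (hl : μ.map l = gaussianReal 0 v) :
    ∃ k : E, l k = 1 ∧ IndepFun l (fun x => x - l x • k) μ := by
  have hG : IsGaussian μ := isGaussian_of_map_eq_gaussianReal fun L => ⟨0, hGauss L⟩
  have hmean : ∀ L : E →L[ℝ] ℝ, ∫ x, L x ∂μ = 0 := by
    intro L
    obtain ⟨w, hw⟩ := hGauss L
    have : ∫ y, y ∂(μ.map L) = ∫ x, L x ∂μ := integral_map (by fun_prop) (by fun_prop)
    rw [← this, hw]
    exact integral_id_gaussianReal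
  have hL2 : ∀ L : E →L[ℝ] ℝ, MemLp L 2 μ := fun L => IsGaussian.memLp_dual μ L 2 (by simp)
  have hint : Integrable (fun x => l x • x) μ :=
    memLp_one_iff_integrable.1 (MemLp.smul (IsGaussian.memLp_two_id (μ := μ)) (hL2 l))
  have hint2 : ∀ L : E →L[ℝ] ℝ, Integrable (fun x => l x * L x) μ := fun L =>
    MemLp.integrable_mul (hL2 l) (hL2 L)
  have hh : ∀ L : E →L[ℝ] ℝ, L (∫ x, l x • x ∂μ) = ∫ x, l x * L x ∂μ := by
    intro L
    rw [← L.integral_comp_comm hint]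
    simp
  have hvar : ∫ x, l x * l x ∂μ = v := by
    have h1 : Var[l; μ] = v := by
      rw [← variance_id_map (by fun_prop), hl, variance_id_gaussianReal]
    rw [← h1, variance_of_integral_eq_zero (by fun_prop) (hmean l)]
    simp [pow_two]
  have hv' : (v : ℝ) ≠ 0 := by exact_mod_cast hv
  refine ⟨(v : ℝ)⁻¹ • ∫ x, l x • x ∂μ, ?_, ?_⟩
  · rw [map_smul, hh, hvar, smul_eq_mul, inv_mul_cancel₀ hv']
  set k := (v : ℝ)⁻¹ • ∫ x, l x • x ∂μ with hk
  have hkL : ∀ L : E →L[ℝ] ℝ, L k * v = ∫ x, l x * L x ∂μ := by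
    intro L
    rw [hk, map_smul, hh, smul_eq_mul]
    field_simp
  let T : E →L[ℝ] ℝ × E := l.prod (ContinuousLinearMap.id ℝ E - l.smulRight k)
  have hT : HasGaussianLaw (fun x => (l x, x - l x • k)) μ := ⟨by
    have : IsGaussian (μ.map T) := inferInstance
    exact this⟩
  refine hT.indepFun_of_covariance_strongDual fun L₁ L₂ => ?_
  have e1 : (L₁ ∘ l : E → ℝ) = fun x => L₁ 1 * l x := by
    ext x
    have : L₁ (l x • 1) = l x • L₁ 1 := map_smul _ _ _
    simp only [smul_eq_mul, mul_one] at this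
    simp [this, mul_comm]
  have e2 : (L₂ ∘ fun x => x - l x • k) = fun x => (L₂ - L₂ k • l) x := by
    ext x
    simp [mul_comm]
  rw [e1, e2, covariance_const_mul_left, covariance_eq_sub (hL2 l) (hL2 _), hmean l]
  have : ∫ x, l x * (L₂ - L₂ k • l) x ∂μ = 0 := by
    have : (fun x => l x * (L₂ - L₂ k • l) x) = fun x => l x * L₂ x - L₂ k * (l x * l x) := by
      ext x
      simp
      ring
    rw [this, integral_sub (hint2 L₂) ((hint2 l).const_mul _), integral_const_mul, hvar, hkL, sub_self]
  simp only [Pi.mul_apply, this]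
  simp

/-- Let `E` be a separable Banach space, `μ` a centered Gaussian probability
measure on `E` with full topological support, and `V : E → ℝ` Borel measurable. If `V` is
continuously Fréchet differentiable and non-constant on some nonempty connected open
`U ⊆ E`, then the pushforward `V_*μ` and Lebesgue measure are not mutually singular. -/
theorem stmt1 {E : Type*} [NormedAddCommGroup E] [NormedSpace ℝ E] [CompleteSpace E]
    [SecondCountableTopology E] [MeasurableSpace E] [BorelSpace E]
    (μ : Measure E) [IsProbabilityMeasure μ]
    (hGauss : ∀ L : E →L[ℝ] ℝ, ∃ v : NNReal, μ.map L = gaussianReal 0 v)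
    (hSupp : ∀ U : Set E, IsOpen U → U.Nonempty → 0 < μ U)
    (V : E → ℝ) (hV : Measurable V)
    (U : Set E) (hU : IsOpen U) (hUconn : IsConnected U)
    (hC1 : ContDiffOn ℝ 1 V U)
    (hnc : ∃ x ∈ U, ∃ y ∈ U, V x ≠ V y) :
    ¬ (μ.map V).MutuallySingular (volume : Measure ℝ) := by
  have hdiff : DifferentiableOn ℝ V U := hC1.differentiableOn (by simp)
  obtain ⟨x0, hx0, hd0⟩ : ∃ x ∈ U, fderiv ℝ V x ≠ 0 := by
    by_contra! hcon
    obtain ⟨x, hx, y, hy, hxy⟩ := hnc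
    exact hxy (hU.is_const_of_fderiv_eq_zero hUconn.isPreconnected hdiff
      (fun z hz => hcon z hz) hx hy)
  set l := fderiv ℝ V x0 with hl
  obtain ⟨v, hv⟩ := hGauss l
  have hv0 : v ≠ 0 := by
    rintro rfl
    rw [gaussianReal_zero_var] at hv
    have h1 : μ.map l {0}ᶜ = 0 := by rw [hv]; simp
    rw [Measure.map_apply (by fun_prop) (measurableSet_singleton _).compl] at h1
    have h2 := hSupp (l ⁻¹' {0}ᶜ) (isOpen_compl_singleton.preimage l.continuous) (by
      by_contra hne
      rw [Set.not_nonempty_iff_eq_empty] at hne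
      apply hd0
      ext x
      by_contra hx
      have : x ∈ l ⁻¹' {0}ᶜ := hx
      rw [hne] at this
      exact this)
    exact h2.ne' h1
  obtain ⟨k, hk, hind⟩ := aux_decomp μ hGauss l v hv0 hv
  rintro ⟨S, hS, hS1, hS2⟩
  have hcont : ContinuousOn (fun x => fderiv ℝ V x k) U :=
    (hC1.continuousOn_fderiv_of_isOpen hU le_rfl).clm_apply continuousOn_const
  have hnhds : {x | x ∈ U ∧ 0 < fderiv ℝ V x k} ∈ nhds x0 := by
    refine Filter.inter_mem (hU.mem_nhds hx0) ?_
    refine (hcont.continuousAt (hU.mem_nhds hx0)).eventually (lt_mem_nhds ?_)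
    change 0 < l k
    rw [hk]
    exact one_pos
  obtain ⟨r, hr, hball⟩ := Metric.mem_nhds_iff.1 hnhds
  set B := Metric.ball x0 r with hB
  have hBpos : 0 < μ B := hSupp B Metric.isOpen_ball ⟨x0, Metric.mem_ball_self hr⟩
  have hVS : μ (V ⁻¹' S) = 0 := by rwa [Measure.map_apply hV hS] at hS1
  have hA : MeasurableSet (B ∩ V ⁻¹' Sᶜ) := Metric.isOpen_ball.measurableSet.inter (hV hS.compl)
  suffices hA0 : μ (B ∩ V ⁻¹' Sᶜ) = 0 by
    have : μ B ≤ 0 := by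
      calc μ B ≤ μ ((B ∩ V ⁻¹' Sᶜ) ∪ V ⁻¹' S) := measure_mono (fun x hx => by
            by_cases h : V x ∈ S
            · exact Or.inr h
            · exact Or.inl ⟨hx, h⟩)
        _ ≤ _ := measure_union_le _ _
        _ = 0 := by rw [hA0, hVS, add_zero]
    exact absurd this (not_le.2 hBpos)
  have hYm : Measurable (fun x : E => x - l x • k) := by fun_prop
  have hprod := (indepFun_iff_map_prod_eq_prod_map_map (by fun_prop) hYm.aemeasurable).1 hind
  let Φ : ℝ × E → E := fun p => p.2 + p.1 • k
  have hΦ : Measurable Φ := by fun_prop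
  have hμ : μ (B ∩ V ⁻¹' Sᶜ) =
      (μ.map (fun x => (l x, x - l x • k))) (Φ ⁻¹' (B ∩ V ⁻¹' Sᶜ)) := by
    rw [Measure.map_apply (by fun_prop) (hΦ hA)]
    congr 1
    ext x
    simp [Φ]
  have : IsProbabilityMeasure (μ.map (fun x : E => x - l x • k)) :=
    Measure.isProbabilityMeasure_map hYm.aemeasurable
  rw [hμ, hprod, hv, Measure.prod_apply_symm (hΦ hA)]
  refine lintegral_eq_zero_of_ae_eq_zero (Filter.Eventually.of_forall fun y => ?_)
  refine gaussianReal_absolutelyContinuous 0 hv0 ?_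
  let g : ℝ → E := fun t => y + t • k
  have hgd : ∀ t, HasDerivAt g k t := fun t => by
    have h := ((hasDerivAt_id t).smul_const k).const_add y
    rw [one_smul] at h
    exact h
  have hg : Continuous g := by fun_prop
  refine aux_oneDim (fun t => V (g t)) (fun t => fderiv ℝ V (g t) k) (hV.comp hg.measurable)
    (g ⁻¹' B) Sᶜ ?_ (Metric.isOpen_ball.preimage hg) ?_ ?_ hS.compl hS2
  · intro s hs t ht a b ha hb hab
    have hc := convex_ball x0 r hs ht ha hb hab
    have e : g (a • s + b • t) = a • g s + b • g t := by
      simp only [g, smul_add, smul_smul, smul_eq_mul, add_smul]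
      have : y = a • y + b • y := by rw [← add_smul, hab, one_smul]
      nth_rewrite 1 [this]
      abel
    change g (a • s + b • t) ∈ B
    rw [e]
    exact hc
  · intro t ht
    have hdV := (hdiff.differentiableAt (hU.mem_nhds (hball ht).1)).hasFDerivAt
    exact hdV.comp_hasDerivAt t (hgd t)
  · intro t ht
    exact (hball ht).2
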